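/- arXiv:1902.03102 — 2 statements merged into one kernel-verified Lean document; each statement's English description precedes it below -/
import Mathlib

section
/- Let Ω = {0,1}^N, S : Ω → {1,...,K} a statistic, m_i, n_k ∈ [0,1], and let C be the nonempty set of distributions p on Ω with p(t_i = 1) = m_i for all i and p(S = k) = n_k for all k. Let Z = {t ∈ Ω : p(t) = 0 for every p ∈ C}. Then the entropy-maximizing distribution p* over C has the form: there exist positive reals u_0, u_1, ..., u_N and v_1, ..., v_K such that p*(t) = u_0 · ∏_{i=1}^N u_i^{t_i} · ∏_{k=1}^K v_k^{[S(t)=k]} for every t ∉ Z, and p*(t) = 0 for every t ∈ Z. Moreover, a transaction t belongs to Z if and only if p(t) = 0 for all p ∈ C. -/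
/-!
Infinite slope of `-x log x` at `0` forces a maximizer `q` to charge every outcome charged by some
competitor: moving from `q` towards such a competitor by a weight `s` gains a positive multiple of
`-s log s` if `q` misses the outcome, and costs only `O(s)`. Hence the outcomes on which all
competitors vanish are the zeros of `q`.

On its support `q` is found by Lagrange multipliers. The perturbations `q (1 + s e)` never leave the
support and stay nonnegative for small `s`, so for a constraint matrix `A` the only condition on `e`
is `A *ᵥ (q * e) = 0`. The derivative of the entropy vanishes along all such `e`; by duality
`-q log q - q` is therefore a combination of the rows of `A * diagonal q`, and dividing by `q` and
exponentiating gives the product form.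
-/

/-- Shannon entropy of a distribution on `{0,1}^N`, with the convention `0 log 0 = 0`. -/
noncomputable def shannonEntropy (N : ℕ) (p : (Fin N → Bool) → ℝ) : ℝ :=
  -∑ t : Fin N → Bool, p t * Real.log (p t)

open Filter Matrix Real
open scoped Topology

lemma exists_vecMul_eq_of_forall_mulVec_eq_zero {K ι T : Type*} [Field K] [Fintype ι]
    [Fintype T] (A : Matrix ι T K) (w : T → K)
    (h : ∀ d, A *ᵥ d = 0 → w ⬝ᵥ d = 0) : ∃ c, c ᵥ* A = w := by
  classical
  have hker : ⨅ i, (dotProductBilin K K (A i)).ker ≤ (dotProductBilin K K w).ker := by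
    intro d hd
    simp only [Submodule.mem_iInf, LinearMap.mem_ker, dotProductBilin_apply_apply] at hd ⊢
    exact h d (funext hd)
  obtain ⟨c, hc⟩ := (Submodule.mem_span_range_iff_exists_fun K).mp
    (mem_span_of_iInf_ker_le_ker hker)
  refine ⟨c, funext fun t => ?_⟩
  simpa [vecMul_eq_sum, Finset.sum_apply] using LinearMap.congr_fun hc (Pi.single t 1)

section Entropy

variable {T : Type*} [Fintype T]

/-- Shannon entropy of a weight `p` on an arbitrary finite type. The total mass is not required to
be `1`. -/
noncomputable def entropy (p : T → ℝ) : ℝ :=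
  ∑ t, negMulLog (p t)

lemma shannonEntropy_eq_entropy (N : ℕ) : shannonEntropy N = entropy := by
  ext p
  simp [shannonEntropy, entropy, negMulLog]

lemma entropy_combo_add_le_entropy {p q : T → ℝ} (hp : 0 ≤ p) (hq : 0 ≤ q) {s : ℝ}
    (hs0 : 0 ≤ s) (hs1 : s ≤ 1) {t₀ : T} (ht₀ : q t₀ = 0) :
    (1 - s) * entropy q + s * entropy p + p t₀ * negMulLog s ≤
      entropy ((1 - s) • q + s • p) := by
  classical
  have pointwise : ∀ t, (1 - s) * negMulLog (q t) + s * negMulLog (p t)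
      + (if t = t₀ then p t₀ * negMulLog s else 0) ≤ negMulLog ((1 - s) * q t + s * p t) := by
    intro t
    split_ifs with h
    · subst h
      simp [ht₀, negMulLog_mul, add_comm]
    · simpa using concaveOn_negMulLog.2 (hq t) (hp t) (sub_nonneg.mpr hs1) hs0 (by ring)
  simpa [entropy, Finset.sum_add_distrib, Finset.mul_sum] using
    Finset.sum_le_sum fun t (_ : t ∈ Finset.univ) => pointwise t

lemma pos_of_isMaxOn_entropy {C : Set (T → ℝ)} (hC : Convex ℝ C) (hC0 : ∀ p ∈ C, 0 ≤ p)
    {p q : T → ℝ} (hp : p ∈ C) (hq : q ∈ C) (hmax : IsMaxOn entropy C q) {t : T}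
    (hpt : 0 < p t) : 0 < q t := by
  refine (hC0 q hq t).lt_of_ne' fun hqt => ?_
  have log_le : ∀ s, 0 < s → s ≤ 1 → p t * -log s ≤ entropy q - entropy p := by
    intro s hs0 hs1
    have hle := (entropy_combo_add_le_entropy (hC0 p hp) (hC0 q hq) hs0.le hs1 hqt).trans
      (hmax (hC hq hp (sub_nonneg.mpr hs1) hs0.le (by ring)))
    refine le_of_mul_le_mul_left ?_ hs0
    rw [negMulLog] at hle
    linarith
  have gap_nonneg : 0 ≤ entropy q - entropy p := by simpa using log_le 1 one_pos le_rfl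
  -- this weight makes `p t * -log s` exceed the gap by exactly `1`
  have hle := log_le (exp (-((entropy q - entropy p + 1) / p t))) (exp_pos _)
    (exp_le_one_iff.mpr (neg_nonpos.mpr (by positivity)))
  rw [log_exp, neg_neg, mul_div_cancel₀ _ hpt.ne'] at hle
  linarith

lemma hasDerivAt_entropy_mul_one_add_smul (q e : T → ℝ) :
    HasDerivAt (fun s : ℝ => entropy (q * (1 + s • e)))
      ((fun t => negMulLog (q t) - q t) ⬝ᵥ e) 0 := by
  refine HasDerivAt.fun_sum fun t _ => ?_
  have hline : HasDerivAt (fun s : ℝ => 1 + s * e t) (e t) 0 := by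
    simpa using ((hasDerivAt_id (0 : ℝ)).mul_const (e t)).const_add 1
  have hneg : HasDerivAt (fun s : ℝ => negMulLog (1 + s * e t)) (-e t) 0 := by
    have houter : HasDerivAt negMulLog (-1) (1 + 0 * e t) := by
      simpa using hasDerivAt_negMulLog one_ne_zero
    simpa [Function.comp_def] using houter.comp 0 hline
  have hsum := (hline.mul_const (negMulLog (q t))).add (hneg.const_mul (q t))
  simp only [Pi.mul_apply, Pi.add_apply, Pi.one_apply, Pi.smul_apply, smul_eq_mul, negMulLog_mul]
  exact hsum.congr_deriv (by ring)

end Entropy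

section LinearFamily

variable {ι T : Type*} [Fintype T] {A : Matrix ι T ℝ} {b : ι → ℝ} {q : T → ℝ}

/-- The linear family of information geometry: nonnegative weights on `T` with prescribed integral
`b i` against each row `A i`. Normalization is not built in; it can be imposed by a constant row. -/
def linearFamily (A : Matrix ι T ℝ) (b : ι → ℝ) : Set (T → ℝ) :=
  {p | 0 ≤ p ∧ A *ᵥ p = b}

lemma convex_linearFamily (A : Matrix ι T ℝ) (b : ι → ℝ) : Convex ℝ (linearFamily A b) :=
  (convex_Ici 0).inter ((convex_singleton b).linear_preimage A.mulVecLin)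

lemma eventually_mul_one_add_smul_mem_linearFamily (hq : q ∈ linearFamily A b) {e : T → ℝ}
    (he : A *ᵥ (q * e) = 0) : ∀ᶠ s : ℝ in 𝓝 0, q * (1 + s • e) ∈ linearFamily A b := by
  have hpos : ∀ᶠ s : ℝ in 𝓝 0, ∀ t, 0 < 1 + s * e t := by
    refine eventually_all.mpr fun t => ContinuousAt.eventually_lt (by fun_prop) (by fun_prop) ?_
    simp
  filter_upwards [hpos] with s hs
  refine ⟨mul_nonneg hq.1 fun t => (hs t).le, ?_⟩
  rw [mul_add, mul_one, mul_smul_comm, mulVec_add, mulVec_smul, he, hq.2, smul_zero, add_zero]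

lemma dotProduct_eq_zero_of_isMaxOn_entropy (hq : q ∈ linearFamily A b)
    (hmax : IsMaxOn entropy (linearFamily A b) q) {e : T → ℝ} (he : A *ᵥ (q * e) = 0) :
    (fun t => negMulLog (q t) - q t) ⬝ᵥ e = 0 := by
  have hloc : IsLocalMax (fun s : ℝ => entropy (q * (1 + s • e))) 0 := by
    filter_upwards [eventually_mul_one_add_smul_mem_linearFamily hq he] with s hs
    simpa using hmax hs
  exact hloc.hasDerivAt_eq_zero (hasDerivAt_entropy_mul_one_add_smul q e)

theorem exists_eq_exp_of_isMaxOn_entropy [Fintype ι] (hq : q ∈ linearFamily A b)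
    (hmax : IsMaxOn entropy (linearFamily A b) q) :
    ∃ c : ι → ℝ, ∀ t, q t ≠ 0 → q t = exp ((c ᵥ* A) t - 1) := by
  classical
  obtain ⟨c, hc⟩ := exists_vecMul_eq_of_forall_mulVec_eq_zero (A * diagonal q)
    (fun t => negMulLog (q t) - q t) fun e he => by
      have hdiag : diagonal q *ᵥ e = q * e := funext (mulVec_diagonal q e)
      rw [← mulVec_mulVec, hdiag] at he
      exact dotProduct_eq_zero_of_isMaxOn_entropy hq hmax he
  refine ⟨-c, fun t ht => ?_⟩
  have hct : (c ᵥ* A) t * q t = negMulLog (q t) - q t := by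
    rw [← congrFun hc t, ← vecMul_vecMul, vecMul_diagonal]
  have hlog : log (q t) = (-c ᵥ* A) t - 1 := by
    refine mul_right_cancel₀ ht ?_
    rw [neg_vecMul, Pi.neg_apply, sub_mul, neg_mul, hct, negMulLog]
    ring
  rw [← hlog, exp_log ((hq.1 t).lt_of_ne' ht)]

theorem forall_mem_linearFamily_eq_zero_iff (hq : q ∈ linearFamily A b)
    (hmax : IsMaxOn entropy (linearFamily A b) q) (t : T) :
    (∀ p ∈ linearFamily A b, p t = 0) ↔ q t = 0 := by
  refine ⟨fun h => h q hq, fun hqt p hp => ?_⟩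
  by_contra hpt
  exact (pos_of_isMaxOn_entropy (convex_linearFamily A b) (fun _ hp => hp.1) hp hq hmax
    ((hp.1 t).lt_of_ne' hpt)).ne' hqt

end LinearFamily

section Margins

variable {T ι κ : Type*} [DecidableEq κ]
  (P : ι → T → Prop) [∀ i, DecidablePred (P i)] (S : T → κ)

/-- The constraint matrix for total mass, the margins of the binary features `P`, and the
distribution of the statistic `S`, in this order; its rows are indicator functions. -/
def marginMatrix : Matrix (Unit ⊕ ι ⊕ κ) T ℝ :=
  Matrix.of <| Sum.elim (fun _ _ => 1) <|
    Sum.elim (fun i t => if P i t then 1 else 0) (fun k t => if S t = k then 1 else 0)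

lemma mem_linearFamily_marginMatrix [Fintype T] {M : ℝ} {m : ι → ℝ} {n : κ → ℝ} {p : T → ℝ} :
    p ∈ linearFamily (marginMatrix P S) (Sum.elim (fun _ => M) (Sum.elim m n)) ↔
      (∀ t, 0 ≤ p t) ∧ ∑ t, p t = M ∧
        (∀ i, ∑ t with P i t, p t = m i) ∧ ∀ k, ∑ t with S t = k, p t = n k := by
  simp [linearFamily, marginMatrix, mulVec, dotProduct, funext_iff, Pi.le_def, Finset.sum_filter]

lemma exp_vecMul_marginMatrix [Fintype ι] [Fintype κ] (c : Unit ⊕ ι ⊕ κ → ℝ) (t : T) :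
    exp ((c ᵥ* marginMatrix P S) t) = exp (c (.inl ())) *
      (∏ i, exp (c (.inr (.inl i))) ^ (if P i t then 1 else 0 : ℕ)) *
      ∏ k, exp (c (.inr (.inr k))) ^ (if S t = k then 1 else 0 : ℕ) := by
  simp [marginMatrix, vecMul, dotProduct, exp_add, exp_sum, mul_assoc, pow_ite, apply_ite exp]

theorem maxent_exponential_form_general [Fintype T] [Fintype ι] [Fintype κ]
    (m : ι → ℝ) (n : κ → ℝ) (C : Set (T → ℝ))
    (hC : C = {p | (∀ t, 0 ≤ p t) ∧ ∑ t, p t = 1 ∧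
      (∀ i, ∑ t with P i t, p t = m i) ∧ ∀ k, ∑ t with S t = k, p t = n k})
    {q : T → ℝ} (hq : q ∈ C) (hmax : IsMaxOn entropy C q) :
    ∃ (Z : Set T) (u0 : ℝ) (u : ι → ℝ) (v : κ → ℝ),
      0 < u0 ∧ (∀ i, 0 < u i) ∧ (∀ k, 0 < v k) ∧
      (∀ t ∉ Z, q t = u0 * (∏ i, u i ^ (if P i t then 1 else 0 : ℕ)) *
        ∏ k, v k ^ (if S t = k then 1 else 0 : ℕ)) ∧
      (∀ t ∈ Z, q t = 0) ∧
      ∀ t, t ∈ Z ↔ ∀ p ∈ C, p t = 0 := by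
  obtain rfl : C = linearFamily (marginMatrix P S) (Sum.elim (fun _ => 1) (Sum.elim m n)) :=
    hC.trans (Set.ext fun p => (mem_linearFamily_marginMatrix P S).symm)
  obtain ⟨c, hc⟩ := exists_eq_exp_of_isMaxOn_entropy hq hmax
  refine ⟨{t | q t = 0}, exp (c (.inl ()) - 1), fun i => exp (c (.inr (.inl i))),
    fun k => exp (c (.inr (.inr k))), exp_pos _, fun _ => exp_pos _, fun _ => exp_pos _,
    fun t ht => ?_, fun _ ht => ht, fun t => (forall_mem_linearFamily_eq_zero_iff hq hmax t).symm⟩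
  rw [hc t ht, exp_sub, exp_vecMul_marginMatrix, exp_sub]
  ring

end Margins

/-- the maximum entropy distribution subject to column margins and statistic
probabilities has an exponential (product) form outside the set `Z` of transactions on which
every distribution of `C` vanishes, and vanishes on `Z`. -/
theorem maxent_exponential_form (N K : ℕ) (S : (Fin N → Bool) → Fin K)
    (m : Fin N → ℝ) (n : Fin K → ℝ)
    (hm : ∀ i, 0 ≤ m i ∧ m i ≤ 1) (hn : ∀ k, 0 ≤ n k ∧ n k ≤ 1)
    (C : Set ((Fin N → Bool) → ℝ))
    (hC : C = {p | (∀ t, 0 ≤ p t) ∧ (∑ t : Fin N → Bool, p t) = 1 ∧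
      (∀ i : Fin N, ∑ t ∈ Finset.univ.filter (fun t : Fin N → Bool => t i = true), p t = m i) ∧
      (∀ k : Fin K, ∑ t ∈ Finset.univ.filter (fun t : Fin N → Bool => S t = k), p t = n k)})
    (hne : C.Nonempty)
    (pstar : (Fin N → Bool) → ℝ) (hpC : pstar ∈ C)
    (hmax : ∀ p ∈ C, shannonEntropy N p ≤ shannonEntropy N pstar) :
    ∃ (Z : Set (Fin N → Bool)) (u0 : ℝ) (u : Fin N → ℝ) (v : Fin K → ℝ),
      0 < u0 ∧ (∀ i, 0 < u i) ∧ (∀ k, 0 < v k) ∧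
      (∀ t ∉ Z, pstar t =
        u0 * (∏ i : Fin N, u i ^ (if t i = true then 1 else 0 : ℕ)) *
          (∏ k : Fin K, v k ^ (if S t = k then 1 else 0 : ℕ))) ∧
      (∀ t ∈ Z, pstar t = 0) ∧
      (∀ t, t ∈ Z ↔ ∀ p ∈ C, p t = 0) := by
  rw [shannonEntropy_eq_entropy] at hmax
  exact maxent_exponential_form_general (fun i t => t i = true) S m n C hC hpC hmax
end

section
/- Let t_1,...,t_N be independent Bernoulli random variables with P(t_l = 1) = p_l ∈ [0,1], and for i ≤ N write P_i(k, j) for the probability that, among the first i coordinates, the lazarus count equals k and the last one-position equals j. Then for 2 ≤ i ≤ N and 1 ≤ k ≤ i - 2: P_i(k, i) = p_i · ∑_{l=0}^{k} P_{i-1}(l, i + l - k - 1). -/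
/-!
The last one-position among the first `n + 1` coordinates is `n + 1` exactly when the last of them
is a one. If the previous last one-position is `j > 0`, that new one turns precisely the `n - j`
zeros after `j` into lazarus items; if `j = 0`, the lazarus count stays `0`. So for `k ≥ 1` the
event is that the last coordinate is a one and that, with `l` the previous lazarus count,
`k = l + (n - j)`. The second condition only involves the first `n` coordinates: split it by the
value of `l` and factor out `p (n + 1)` by independence.
-/

/-- Probability of the transaction `t` under independent Bernoulli coordinates, where item
`l ∈ {1,...,N}` (coordinate `l-1`) takes value `1` with probability `p l`. -/
noncomputable def bernProb (N : ℕ) (p : ℕ → ℝ) (t : Fin N → Bool) : ℝ :=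
  ∏ l : Fin N, if t l = true then p ((l : ℕ) + 1) else 1 - p ((l : ℕ) + 1)

/-- The lazarus count of the restriction of `t` to its first `i` coordinates
(items `1,...,i`): the number of zeros lying strictly between two ones, all within the
first `i` coordinates. -/
def lazTo (N : ℕ) (t : Fin N → Bool) (i : ℕ) : ℕ :=
  (Finset.univ.filter fun l : Fin N =>
    (l : ℕ) + 1 ≤ i ∧ t l = false ∧
      ∃ a b : Fin N, (b : ℕ) + 1 ≤ i ∧ a < l ∧ l < b ∧ t a = true ∧ t b = true).card

/-- The last one-position (in `{1,...,i}`, or `0` if none) of the restriction of `t` to its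
first `i` coordinates. -/
def lastTo (N : ℕ) (t : Fin N → Bool) (i : ℕ) : ℕ :=
  (Finset.univ.filter fun l : Fin N => (l : ℕ) + 1 ≤ i ∧ t l = true).sup fun l => (l : ℕ) + 1

/-- `P_i(k, j)`: the probability that, among the first `i` coordinates, the lazarus count
equals `k` and the last one-position equals `j`. -/
noncomputable def lazLastProb (N : ℕ) (p : ℕ → ℝ) (i k j : ℕ) : ℝ :=
  ∑ t ∈ Finset.univ.filter
      (fun t : Fin N → Bool => lazTo N t i = k ∧ lastTo N t i = j),
    bernProb N p t

section ProductWeights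

variable {ι : Type*} {β : ι → Type*} [Fintype ι] [DecidableEq ι] [∀ i, Fintype (β i)]
  {c : ι} [DecidableEq (β c)]

lemma sum_filter_apply_eq_of_dependsOn {M : Type*} [AddCommMonoid M] {g : (∀ i, β i) → M}
    (hg : DependsOn g {c}ᶜ) (a b : β c) :
    ∑ t with t c = a, g t = ∑ t with t c = b, g t := by
  refine Finset.sum_nbij' (Function.update · c b) (Function.update · c a) ?_ ?_ ?_ ?_ ?_
  · simp
  · simp
  · rintro t ht
    simp [← (Finset.mem_filter.1 ht).2]
  · rintro t ht
    simp [← (Finset.mem_filter.1 ht).2]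
  · exact fun t _ => hg fun i hi => (Function.update_of_ne hi _ _).symm

variable {R : Type*} [CommSemiring R]

lemma sum_apply_mul_of_dependsOn (f : β c → R) {g : (∀ i, β i) → R} (hg : DependsOn g {c}ᶜ)
    (b : β c) : ∑ t, f (t c) * g t = (∑ a, f a) * ∑ t with t c = b, g t := by
  calc ∑ t, f (t c) * g t
      = ∑ a, ∑ t with t c = a, f (t c) * g t := (Finset.sum_fiberwise _ _ _).symm
    _ = ∑ a, f a * ∑ t with t c = b, g t := by
      refine Finset.sum_congr rfl fun a _ => ?_
      rw [← sum_filter_apply_eq_of_dependsOn hg a b, Finset.mul_sum]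
      exact Finset.sum_congr rfl fun t ht => by rw [(Finset.mem_filter.1 ht).2]
    _ = (∑ a, f a) * ∑ t with t c = b, g t := (Finset.sum_mul _ _ _).symm

lemma sum_prod_filter_apply_eq_and (w : ∀ i, β i → R) (hw : ∑ a, w c a = 1)
    {E : (∀ i, β i) → Prop} [DecidablePred E] (hE : DependsOn E {c}ᶜ) (b : β c) :
    ∑ t with t c = b ∧ E t, ∏ i, w i (t i) = w c b * ∑ t with E t, ∏ i, w i (t i) := by
  let g : (∀ i, β i) → R := fun t => if E t then ∏ i ∈ Finset.univ.erase c, w i (t i) else 0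
  have hg : DependsOn g {c}ᶜ := by
    intro s t hst
    have hprod : ∏ i ∈ Finset.univ.erase c, w i (s i) = ∏ i ∈ Finset.univ.erase c, w i (t i) :=
      Finset.prod_congr rfl fun i hi => by rw [hst i (Finset.ne_of_mem_erase hi)]
    simp only [g, hE hst, hprod]
  have hfactor (t : ∀ i, β i) : (if E t then ∏ i, w i (t i) else 0) = w c (t c) * g t := by
    simp only [g, mul_ite, mul_zero,
      Finset.mul_prod_erase _ (fun i => w i (t i)) (Finset.mem_univ c)]
  have htotal : ∑ t with E t, ∏ i, w i (t i) = ∑ t with t c = b, g t := by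
    simp only [Finset.sum_filter E, hfactor, sum_apply_mul_of_dependsOn _ hg b, hw, one_mul]
  rw [htotal, ← Finset.filter_filter, Finset.sum_filter, Finset.mul_sum]
  refine Finset.sum_congr rfl fun t ht => ?_
  rw [hfactor, (Finset.mem_filter.1 ht).2]

end ProductWeights

section LazarusBelow

variable {α : Type*} [LinearOrder α] [Fintype α]

/-- The zeros of `t` below `c` that are preceded by a one. When `c` is the last one of a
transaction, these are its lazarus items. -/
def lazarusBelow (t : α → Bool) (c : α) : Finset α :=
  {l | l < c ∧ t l = false ∧ ∃ a < l, t a = true}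

variable {t : α → Bool} {c : α}

lemma mem_lazarusBelow {l : α} :
    l ∈ lazarusBelow t c ↔ l < c ∧ t l = false ∧ ∃ a < l, t a = true :=
  Finset.mem_filter_univ l

lemma lazarusBelow_eq_empty (h : ∀ l < c, t l = false) : lazarusBelow t c = ∅ := by
  refine Finset.eq_empty_of_forall_notMem fun l hl => ?_
  obtain ⟨hlc, -, a, hal, hta⟩ := mem_lazarusBelow.1 hl
  simp [h a (hal.trans hlc)] at hta

lemma lazarusBelow_eq_union_Ioo [LocallyFiniteOrder α] {m : α} (hmc : m < c) (hm : t m = true)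
    (hgap : ∀ l, m < l → l < c → t l = false) :
    lazarusBelow t c = lazarusBelow t m ∪ Finset.Ioo m c := by
  ext l
  simp only [Finset.mem_union, mem_lazarusBelow, Finset.mem_Ioo]
  constructor
  · rintro ⟨hlc, hl⟩
    have hne : l ≠ m := by
      rintro rfl
      simp [hm] at hl
    exact hne.lt_or_gt.imp (⟨·, hl⟩) (⟨·, hlc⟩)
  · rintro (⟨hlm, hl⟩ | ⟨hml, hlc⟩)
    · exact ⟨hlm.trans hmc, hl⟩
    · exact ⟨hlc, hgap l hml hlc, m, hml, hm⟩

lemma card_lazarusBelow_eq_add_card_Ioo [LocallyFiniteOrder α] {m : α} (hmc : m < c)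
    (hm : t m = true) (hgap : ∀ l, m < l → l < c → t l = false) :
    (lazarusBelow t c).card = (lazarusBelow t m).card + (Finset.Ioo m c).card := by
  rw [lazarusBelow_eq_union_Ioo hmc hm hgap, Finset.card_union_of_disjoint]
  exact Finset.disjoint_left.2 fun l hl hl' =>
    (mem_lazarusBelow.1 hl).1.not_gt (Finset.mem_Ioo.1 hl').1

end LazarusBelow

section LastOne

variable {N n : ℕ} {t : Fin N → Bool}

lemma lt_lastTo_iff {j : ℕ} :
    j < lastTo N t n ↔ ∃ l : Fin N, j ≤ l ∧ (l : ℕ) < n ∧ t l = true := by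
  simp [lastTo, Finset.lt_sup_iff, and_comm]

lemma lastTo_le_iff {j : ℕ} :
    lastTo N t n ≤ j ↔ ∀ l : Fin N, j ≤ l → (l : ℕ) < n → t l = false := by
  rw [← not_lt, lt_lastTo_iff]
  simp

lemma lastTo_le (N n : ℕ) (t : Fin N → Bool) : lastTo N t n ≤ n :=
  lastTo_le_iff.2 fun _ hnl hln => absurd hln hnl.not_gt

lemma exists_lastTo_eq_add_one (h : 0 < lastTo N t n) : ∃ m : Fin N, lastTo N t n = m + 1 := by
  obtain ⟨j, hj⟩ := Nat.exists_eq_add_one.2 h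
  obtain ⟨m, hjm, hmn, htm⟩ := lt_lastTo_iff.1 (hj ▸ j.lt_succ_self : j < lastTo N t n)
  have hm : (m : ℕ) < lastTo N t n := lt_lastTo_iff.2 ⟨m, le_rfl, hmn, htm⟩
  exact ⟨m, by omega⟩

lemma lastTo_eq_add_one_iff {m : Fin N} :
    lastTo N t n = m + 1 ↔
      (m : ℕ) < n ∧ t m = true ∧ ∀ l, m < l → (l : ℕ) < n → t l = false := by
  have hle : lastTo N t n ≤ m + 1 ↔ ∀ l, m < l → (l : ℕ) < n → t l = false := lastTo_le_iff
  rw [le_antisymm_iff, hle, Nat.add_one_le_iff, lt_lastTo_iff]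
  constructor
  · rintro ⟨hgap, l, hml, hln, htl⟩
    obtain rfl : m = l := (Fin.le_def.2 hml).eq_of_not_lt fun hlt => by simp [hgap l hlt hln] at htl
    exact ⟨hln, htl, hgap⟩
  · rintro ⟨hmn, htm, hgap⟩
    exact ⟨hgap, m, le_rfl, hmn, htm⟩

lemma lastTo_add_one_eq_iff {c : Fin N} : lastTo N t (c + 1) = c + 1 ↔ t c = true := by
  rw [lastTo_eq_add_one_iff]
  exact ⟨fun h => h.2.1, fun h => ⟨c.val.lt_succ_self, h, fun l hcl hlc =>
    absurd hcl (Nat.le_of_lt_succ hlc).not_gt⟩⟩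

lemma dependsOn_lastTo (N n : ℕ) :
    DependsOn (fun t : Fin N → Bool => lastTo N t n) {l | (l : ℕ) < n} := by
  refine fun s t hst => eq_of_forall_lt_iff fun j => ?_
  simp only [lt_lastTo_iff]
  exact exists_congr fun l => and_congr_right fun _ => and_congr_right fun hln => by rw [hst l hln]

end LastOne

section LazarusCount

variable {N n : ℕ} {t : Fin N → Bool}

lemma lazTo_eq_card_lazarusBelow {m : Fin N} (h : lastTo N t n = m + 1) :
    lazTo N t n = (lazarusBelow t m).card := by
  obtain ⟨hmn, htm, hgap⟩ := lastTo_eq_add_one_iff.1 h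
  unfold lazTo
  congr 1
  ext l
  rw [Finset.mem_filter_univ, mem_lazarusBelow]
  constructor
  · rintro ⟨-, hl, a, b, hbn, hal, hlb, hta, htb⟩
    have hbm : b ≤ m := not_lt.1 fun hmb => by simp [hgap b hmb hbn] at htb
    exact ⟨hlb.trans_le hbm, hl, a, hal, hta⟩
  · rintro ⟨hlm, hl, a, hal, hta⟩
    exact ⟨(Nat.succ_le_of_lt hlm).trans hmn.le, hl, a, m, hmn, hal, hlm, hta, htm⟩

lemma dependsOn_lazTo (N n : ℕ) :
    DependsOn (fun t : Fin N → Bool => lazTo N t n) {l | (l : ℕ) < n} := by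
  intro s t hst
  refine congrArg Finset.card (Finset.filter_congr fun l _ => and_congr_right fun hln => ?_)
  rw [hst l hln]
  refine and_congr_right fun _ => exists_congr fun a => exists_congr fun b =>
    and_congr_right fun hbn => and_congr_right fun hal => and_congr_right fun _ => ?_
  have han : (a : ℕ) < n := (Fin.lt_def.1 hal).trans hln
  rw [hst a han, hst b hbn]

variable {c : Fin N}

lemma lazTo_add_one_of_lastTo_eq_zero (hc : t c = true) (h : lastTo N t c = 0) :
    lazTo N t (c + 1) = 0 := by
  rw [lazTo_eq_card_lazarusBelow (lastTo_add_one_eq_iff.2 hc), Finset.card_eq_zero]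
  exact lazarusBelow_eq_empty fun l hlc => lastTo_le_iff.1 h.le l l.val.zero_le hlc

lemma lazTo_add_one_of_lastTo_pos (hc : t c = true) (h : 0 < lastTo N t c) :
    lazTo N t (c + 1) = lazTo N t c + (c - lastTo N t c) := by
  obtain ⟨m, hm⟩ := exists_lastTo_eq_add_one h
  obtain ⟨hmc, htm, hgap⟩ := lastTo_eq_add_one_iff.1 hm
  rw [lazTo_eq_card_lazarusBelow (lastTo_add_one_eq_iff.2 hc), lazTo_eq_card_lazarusBelow hm, hm,
    card_lazarusBelow_eq_add_card_Ioo (Fin.lt_def.2 hmc) htm hgap, Fin.card_Ioo, Nat.sub_sub]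

lemma lazTo_and_lastTo_add_one_iff {k : ℕ} (hk : 1 ≤ k) (hkc : k < c) :
    lazTo N t (c + 1) = k ∧ lastTo N t (c + 1) = c + 1 ↔
      t c = true ∧ lazTo N t c ≤ k ∧ lastTo N t c = c + lazTo N t c - k := by
  rw [lastTo_add_one_eq_iff, and_comm]
  refine and_congr_right fun hc => ?_
  have hle := lastTo_le N c t
  rcases Nat.eq_zero_or_pos (lastTo N t c) with h0 | hpos
  · rw [lazTo_add_one_of_lastTo_eq_zero hc h0]
    omega
  · rw [lazTo_add_one_of_lastTo_pos hc hpos]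
    omega

end LazarusCount

section Recurrence

variable {N : ℕ} (p : ℕ → ℝ) (c : Fin N)

lemma sum_bernProb_filter_apply_and {E : (Fin N → Bool) → Prop} [DecidablePred E]
    (hE : DependsOn E {c}ᶜ) :
    ∑ t with t c = true ∧ E t, bernProb N p t = p (c + 1) * ∑ t with E t, bernProb N p t :=
  sum_prod_filter_apply_eq_and
    (fun (l : Fin N) b => if b = true then p (l + 1) else 1 - p (l + 1)) (by simp) hE true

lemma sum_bernProb_filter_apply_and_lazTo_and_lastTo (l j : ℕ) :
    ∑ t with t c = true ∧ lazTo N t c = l ∧ lastTo N t c = j, bernProb N p t =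
      p (c + 1) * lazLastProb N p c l j := by
  have hsub : {l : Fin N | (l : ℕ) < c} ⊆ {c}ᶜ := fun l (hlc : l < c) => hlc.ne
  refine sum_bernProb_filter_apply_and p c fun s t hst => ?_
  have hlaz : lazTo N s c = lazTo N t c := (dependsOn_lazTo N c).mono hsub hst
  have hlast : lastTo N s c = lastTo N t c := (dependsOn_lastTo N c).mono hsub hst
  rw [hlaz, hlast]

/-- Indices are shifted: `c : Fin N` is item `c + 1`, and `lazLastProb N p c` concerns the items
before it. -/
theorem lazarus_recurrence_last_is_i_general {k : ℕ} (hk : 1 ≤ k) (hkc : k < c) :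
    lazLastProb N p (c + 1) k (c + 1) =
      p (c + 1) * ∑ l ∈ Finset.range (k + 1), lazLastProb N p c l (c + l - k) := by
  have hmaps : ∀ t ∈ Finset.univ.filter fun t : Fin N → Bool =>
      lazTo N t (c + 1) = k ∧ lastTo N t (c + 1) = c + 1,
      lazTo N t c ∈ Finset.range (k + 1) := fun t ht =>
    Finset.mem_range_succ_iff.2
      ((lazTo_and_lastTo_add_one_iff hk hkc).1 ((Finset.mem_filter_univ t).1 ht)).2.1
  rw [lazLastProb, ← Finset.sum_fiberwise_of_maps_to hmaps, Finset.mul_sum]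
  refine Finset.sum_congr rfl fun l hl => ?_
  rw [← sum_bernProb_filter_apply_and_lazTo_and_lastTo, Finset.filter_filter]
  refine Finset.sum_congr (Finset.filter_congr fun t _ => ?_) fun _ _ => rfl
  rw [lazTo_and_lastTo_add_one_iff hk hkc]
  have hlk := Finset.mem_range_succ_iff.1 hl
  constructor
  · rintro ⟨⟨hc, -, hlast⟩, rfl⟩
    exact ⟨hc, rfl, hlast⟩
  · rintro ⟨hc, rfl, hlast⟩
    exact ⟨⟨hc, hlk, hlast⟩, rfl⟩

end Recurrence

/-- the forward recurrence for the joint lazarus-count / last-one-position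
probabilities, for `2 ≤ i ≤ N` and `1 ≤ k ≤ i - 2`:
`P_i(k, i) = p_i · ∑_{l=0}^{k} P_{i-1}(l, i + l - k - 1)`. -/
theorem lazarus_recurrence_last_is_i (N : ℕ) (p : ℕ → ℝ)
    (hp : ∀ l, 1 ≤ l → l ≤ N → 0 ≤ p l ∧ p l ≤ 1)
    (i k : ℕ) (hi2 : 2 ≤ i) (hiN : i ≤ N) (hk1 : 1 ≤ k) (hk2 : k ≤ i - 2) :
    lazLastProb N p i k i
      = p i * ∑ l ∈ Finset.range (k + 1), lazLastProb N p (i - 1) l (i + l - k - 1) := by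
  obtain ⟨c, rfl⟩ : ∃ c : Fin N, i = c + 1 :=
    ⟨⟨i - 1, by omega⟩, (Nat.sub_add_cancel (by omega)).symm⟩
  simpa [Nat.add_right_comm _ 1, Nat.sub_right_comm _ _ 1] using
    lazarus_recurrence_last_is_i_general p c hk1 (by omega)
end
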